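/- Let x⃗ = a_1 x⃗_1 + ⋯ + a_n x⃗_n + a c⃗ be an element of 𝕃 in normal form (0 ≤ a_i < p_i, a ∈ ℤ). Then the following are equivalent: (a) x⃗ ≤ d c⃗; (b) a + |{i : a_i > 0}| ≤ d; (c) it is not the case that 0 ≤ x⃗ + ω⃗. In particular, the interval [0, d c⃗] equals {x⃗ ∈ 𝕃 : 0 ≤ x⃗ and not 0 ≤ x⃗ + ω⃗}. -/

import Mathlib

/-- The subgroup of relations `p i • x⃗_i − c⃗` inside the free abelian group
`(Fin n → ℤ) × ℤ` on the generators `x⃗_1, …, x⃗_n, c⃗`. -/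
def GLrels (n : ℕ) (p : Fin n → ℕ) : AddSubgroup ((Fin n → ℤ) × ℤ) :=
  AddSubgroup.closure (Set.range fun i : Fin n => ((Pi.single i (p i : ℤ), -1) : (Fin n → ℤ) × ℤ))

/-- The grading group `𝕃 = ⟨x⃗_1, …, x⃗_n, c⃗⟩ / ⟨p_i x⃗_i − c⃗⟩`. -/
abbrev GLgroup (n : ℕ) (p : Fin n → ℕ) : Type :=
  ((Fin n → ℤ) × ℤ) ⧸ GLrels n p

/-- The generator `x⃗_i` of `𝕃`. -/
def GLx (n : ℕ) (p : Fin n → ℕ) (i : Fin n) : GLgroup n p :=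
  QuotientAddGroup.mk (Pi.single i 1, 0)

/-- The generator `c⃗` of `𝕃`. -/
def GLc (n : ℕ) (p : Fin n → ℕ) : GLgroup n p :=
  QuotientAddGroup.mk (0, 1)

/-- The positive cone `𝕃_+`: the submonoid of `𝕃` generated by `x⃗_1, …, x⃗_n` and `c⃗`. -/
def GLplus (n : ℕ) (p : Fin n → ℕ) : AddSubmonoid (GLgroup n p) :=
  AddSubmonoid.closure ({GLc n p} ∪ Set.range (GLx n p))

/-- The partial order relation on `𝕃`: `x⃗ ≤ y⃗` iff `y⃗ − x⃗ ∈ 𝕃_+`. -/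
def GLle (n : ℕ) (p : Fin n → ℕ) (x y : GLgroup n p) : Prop :=
  y - x ∈ GLplus n p

/-- The dualizing element `ω⃗ = (n − d − 1) c⃗ − Σ_i x⃗_i` of `𝕃`. -/
def GLomega (d n : ℕ) (p : Fin n → ℕ) : GLgroup n p :=
  ((n : ℤ) - d - 1) • GLc n p - ∑ i, GLx n p i

/-!
Moving multiples of `p_i x⃗_i = c⃗` into the `c⃗`-coordinate brings every `z⃗ ∈ 𝕃` into normal form;
the resulting coefficient of `c⃗` is `ℓ(z⃗) = b + ∑ i, ⌊v_i / p_i⌋` for any representative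
`∑ i, v_i x⃗_i + b c⃗`. Since `ℓ` is superadditive, `𝕃_+ = {ℓ ≥ 0}`. The identity
`⌊(-v - 1) / p⌋ = -1 - ⌊v / p⌋` gives `ℓ(ω⃗ + d c⃗ - z⃗) = -1 - ℓ(z⃗)`, so exactly one of `z⃗` and
`ω⃗ + d c⃗ - z⃗` lies in `𝕃_+`; at `d c⃗ - x⃗` this is (a) ⇔ (c). For `x⃗` in normal form,
`ℓ(d c⃗ - x⃗) = d - (a + |{i : a_i > 0}|)`, which is (a) ⇔ (b).
-/

theorem neg_sub_one_ediv_of_pos (v : ℤ) {q : ℤ} (hq : 0 < q) : (-v - 1) / q = -1 - v / q := by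
  rw [Int.ediv_eq_iff_of_pos hq]
  have hlower := Int.ediv_mul_le v hq.ne'
  have hupper := Int.lt_ediv_add_one_mul_self v hq
  constructor <;> linarith

theorem neg_ediv_of_nonneg_of_lt {a q : ℤ} (ha : 0 ≤ a) (haq : a < q) :
    -a / q = -if 0 < a then 1 else 0 := by
  rw [Int.ediv_eq_iff_of_pos (ha.trans_lt haq)]
  split_ifs <;> constructor <;> linarith

namespace GLgroup

variable {n : ℕ} {p : Fin n → ℕ}

theorem mk_eq_sum (v : Fin n → ℤ) (b : ℤ) :
    (QuotientAddGroup.mk (v, b) : GLgroup n p) = (∑ i, v i • GLx n p i) + b • GLc n p := by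
  have hrep : (v, b) = (∑ i, v i • ((Pi.single i 1, 0) : (Fin n → ℤ) × ℤ)) + b • (0, 1) := by
    ext j
    · simp [Prod.fst_sum, Pi.single_apply]
    · simp [Prod.snd_sum]
  rw [hrep, QuotientAddGroup.mk_add, QuotientAddGroup.mk_sum]
  rfl

theorem exists_eq_sum (z : GLgroup n p) :
    ∃ (v : Fin n → ℤ) (b : ℤ), z = (∑ i, v i • GLx n p i) + b • GLc n p := by
  obtain ⟨⟨v, b⟩, rfl⟩ := QuotientAddGroup.mk_surjective z
  exact ⟨v, b, mk_eq_sum v b⟩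

theorem zsmul_GLx (i : Fin n) : (p i : ℤ) • GLx n p i = GLc n p := by
  have hrel : (Pi.single i (p i : ℤ), -1) ∈ GLrels n p := AddSubgroup.subset_closure ⟨i, rfl⟩
  have hzero := (QuotientAddGroup.eq_zero_iff _).mpr hrel
  rw [mk_eq_sum, Finset.sum_eq_single i (fun j _ hji => by simp [hji]) (by simp)] at hzero
  simpa [← sub_eq_add_neg, sub_eq_zero] using hzero

theorem GLc_mem_GLplus : GLc n p ∈ GLplus n p :=
  AddSubmonoid.subset_closure (Or.inl rfl)

theorem GLx_mem_GLplus (i : Fin n) : GLx n p i ∈ GLplus n p :=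
  AddSubmonoid.subset_closure (Or.inr ⟨i, rfl⟩)

theorem zsmul_mem_GLplus {z : GLgroup n p} (hz : z ∈ GLplus n p) {m : ℤ} (hm : 0 ≤ m) :
    m • z ∈ GLplus n p := by
  lift m to ℕ using hm
  rw [natCast_zsmul]
  exact AddSubmonoid.nsmul_mem _ hz m

/-- The `c⃗`-coefficient of the normal form, computed from a representative `(v, b)` of
`∑ i, v_i x⃗_i + b c⃗`; it descends to `𝕃` as `cCoeff`. -/
def cCoeffRep (p : Fin n → ℕ) (w : (Fin n → ℤ) × ℤ) : ℤ :=
  w.2 + ∑ i, w.1 i / (p i : ℤ)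

section NormalForm

variable [∀ i, NeZero (p i)]

theorem weight_pos (i : Fin n) : (0 : ℤ) < p i :=
  Int.natCast_pos.mpr (NeZero.pos (p i))

theorem cCoeffRep_periodic_relator (i : Fin n) :
    Function.Periodic (cCoeffRep p) (Pi.single i (p i : ℤ), -1) := by
  intro w
  have hdiv : ∀ j, (w.1 j + (Pi.single i (p i : ℤ) : Fin n → ℤ) j) / (p j : ℤ) =
      w.1 j / (p j : ℤ) + if j = i then 1 else 0 := by
    intro j
    rcases eq_or_ne j i with rfl | hji
    · simp [Int.add_ediv_of_dvd_right, Int.ediv_self (weight_pos j).ne']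
    · simp [hji]
  simp only [cCoeffRep, Prod.fst_add, Prod.snd_add, Pi.add_apply, hdiv, Finset.sum_add_distrib,
    Finset.sum_ite_eq', Finset.mem_univ, if_true]
  ring

theorem cCoeffRep_periodic {r : (Fin n → ℤ) × ℤ} (hr : r ∈ GLrels n p) :
    Function.Periodic (cCoeffRep p) r := by
  induction hr using AddSubgroup.closure_induction with
  | mem _ hx =>
    obtain ⟨i, rfl⟩ := hx
    exact cCoeffRep_periodic_relator i
  | zero => exact Function.periodic_with_period_zero _
  | add _ _ _ _ hx hy => exact hx.add_period hy
  | neg _ _ hx => exact hx.neg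

/-- The coefficient of `c⃗` in the normal form of an element of `𝕃`. -/
def cCoeff (z : GLgroup n p) : ℤ :=
  Quotient.lift (cCoeffRep p) (fun w w' hww' => by
    have hperiod := cCoeffRep_periodic (QuotientAddGroup.leftRel_apply.mp hww') w
    rw [← hperiod, add_neg_cancel_left]) z

theorem cCoeff_sum (v : Fin n → ℤ) (b : ℤ) :
    cCoeff ((∑ i, v i • GLx n p i) + b • GLc n p) = b + ∑ i, v i / (p i : ℤ) := by
  rw [← mk_eq_sum]
  rfl

theorem cCoeff_zero : cCoeff (0 : GLgroup n p) = 0 := by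
  simpa using cCoeff_sum (p := p) 0 0

theorem cCoeff_GLc : cCoeff (GLc n p) = 1 := by
  simpa using cCoeff_sum (p := p) 0 1

theorem cCoeff_GLx_nonneg (i : Fin n) : 0 ≤ cCoeff (GLx n p i) := by
  change 0 ≤ 0 + ∑ j, (Pi.single i 1 : Fin n → ℤ) j / (p j : ℤ)
  rw [zero_add]
  have hsingle : 0 ≤ (Pi.single i 1 : Fin n → ℤ) := Pi.single_nonneg.mpr zero_le_one
  exact Finset.sum_nonneg fun j _ => Int.ediv_nonneg (hsingle j) (weight_pos j).le

theorem cCoeff_add_le (y z : GLgroup n p) : cCoeff y + cCoeff z ≤ cCoeff (y + z) := by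
  obtain ⟨u, a, rfl⟩ := exists_eq_sum y
  obtain ⟨v, b, rfl⟩ := exists_eq_sum z
  have hadd : (∑ i, u i • GLx n p i) + a • GLc n p + ((∑ i, v i • GLx n p i) + b • GLc n p) =
      (∑ i, (u i + v i) • GLx n p i) + (a + b) • GLc n p := by
    simp only [add_zsmul, Finset.sum_add_distrib]
    abel
  rw [hadd, cCoeff_sum, cCoeff_sum, cCoeff_sum, add_add_add_comm, ← Finset.sum_add_distrib]
  gcongr with i
  exact Int.ediv_add_ediv_le_add_ediv (weight_pos i)

theorem sum_zsmul_eq_sum_emod_add_cCoeff (v : Fin n → ℤ) (b : ℤ) :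
    (∑ i, v i • GLx n p i) + b • GLc n p =
      (∑ i, (v i % (p i : ℤ)) • GLx n p i) +
        cCoeff ((∑ i, v i • GLx n p i) + b • GLc n p) • GLc n p := by
  have hcarry : ∀ i, v i • GLx n p i =
      (v i % (p i : ℤ)) • GLx n p i + (v i / (p i : ℤ)) • GLc n p := by
    intro i
    rw [← zsmul_GLx i, ← mul_smul, ← add_zsmul, Int.emod_add_ediv_mul]
  rw [cCoeff_sum, Finset.sum_congr rfl fun i _ => hcarry i, Finset.sum_add_distrib,
    ← Finset.sum_smul, add_zsmul]
  abel

theorem mem_GLplus_iff {z : GLgroup n p} : z ∈ GLplus n p ↔ 0 ≤ cCoeff z := by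
  constructor
  · intro hz
    induction hz using AddSubmonoid.closure_induction with
    | mem _ hx =>
      rcases hx with rfl | ⟨i, rfl⟩
      · exact zero_le_one.trans_eq cCoeff_GLc.symm
      · exact cCoeff_GLx_nonneg i
    | zero => exact cCoeff_zero.ge
    | add x y _ _ hx hy => exact (add_nonneg hx hy).trans (cCoeff_add_le x y)
  · intro hz
    obtain ⟨v, b, rfl⟩ := exists_eq_sum z
    rw [sum_zsmul_eq_sum_emod_add_cCoeff]
    refine add_mem (sum_mem fun i _ => ?_) (zsmul_mem_GLplus GLc_mem_GLplus hz)
    exact zsmul_mem_GLplus (GLx_mem_GLplus i) (Int.emod_nonneg _ (weight_pos i).ne')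

end NormalForm

/-- The element `(n - 1) c⃗ - ∑ i, x⃗_i = ω⃗ + d c⃗`, which plays for `𝕃_+` the role of the
Frobenius number of a symmetric numerical semigroup. -/
def frobeniusElement (n : ℕ) (p : Fin n → ℕ) : GLgroup n p :=
  ((n : ℤ) - 1) • GLc n p - ∑ i, GLx n p i

theorem add_GLomega (d : ℕ) (z : GLgroup n p) :
    z + GLomega d n p = frobeniusElement n p - ((d : ℤ) • GLc n p - z) := by
  simp only [GLomega, frobeniusElement, sub_smul]
  abel

section Symmetry

variable [∀ i, NeZero (p i)]

theorem cCoeff_frobeniusElement_sub (z : GLgroup n p) :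
    cCoeff (frobeniusElement n p - z) = -1 - cCoeff z := by
  obtain ⟨v, b, rfl⟩ := exists_eq_sum z
  have hsub : frobeniusElement n p - ((∑ i, v i • GLx n p i) + b • GLc n p) =
      (∑ i, (-v i - 1) • GLx n p i) + ((n : ℤ) - 1 - b) • GLc n p := by
    simp only [frobeniusElement, sub_smul, neg_smul, one_smul, Finset.sum_sub_distrib,
      Finset.sum_neg_distrib]
    abel
  rw [hsub, cCoeff_sum, cCoeff_sum,
    Finset.sum_congr rfl fun i _ => neg_sub_one_ediv_of_pos (v i) (weight_pos i),
    Finset.sum_sub_distrib, Finset.sum_const, Finset.card_univ, Fintype.card_fin, nsmul_eq_mul]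
  ring

theorem frobeniusElement_sub_mem_GLplus_iff {z : GLgroup n p} :
    frobeniusElement n p - z ∈ GLplus n p ↔ z ∉ GLplus n p := by
  rw [mem_GLplus_iff, mem_GLplus_iff, cCoeff_frobeniusElement_sub]
  lia

theorem le_zsmul_GLc_iff_not_nonneg_add_GLomega (d : ℕ) (z : GLgroup n p) :
    GLle n p z ((d : ℤ) • GLc n p) ↔ ¬ GLle n p 0 (z + GLomega d n p) := by
  rw [GLle, GLle, sub_zero, add_GLomega, frobeniusElement_sub_mem_GLplus_iff, not_not]

theorem cCoeff_zsmul_GLc_sub_normalForm {a : Fin n → ℤ} (ha : ∀ i, 0 ≤ a i ∧ a i < (p i : ℤ))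
    (b m : ℤ) :
    cCoeff (m • GLc n p - ((∑ i, a i • GLx n p i) + b • GLc n p)) =
      m - (b + ((Finset.univ.filter fun i => 0 < a i).card : ℤ)) := by
  have hsub : m • GLc n p - ((∑ i, a i • GLx n p i) + b • GLc n p) =
      (∑ i, -a i • GLx n p i) + (m - b) • GLc n p := by
    simp only [sub_smul, neg_smul, Finset.sum_neg_distrib]
    abel
  rw [hsub, cCoeff_sum,
    Finset.sum_congr rfl fun i _ => neg_ediv_of_nonneg_of_lt (ha i).1 (ha i).2,
    Finset.sum_neg_distrib, Finset.sum_boole]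
  ring

end Symmetry

end GLgroup

/-- For `x⃗ = Σ a_i x⃗_i + a c⃗` in normal form, the conditions
(a) `x⃗ ≤ d c⃗`, (b) `a + |{i : a_i > 0}| ≤ d`, and (c) `¬ (0 ≤ x⃗ + ω⃗)` are equivalent;
in particular `[0, d c⃗] = {x⃗ : 0 ≤ x⃗ and ¬ 0 ≤ x⃗ + ω⃗}`. -/
theorem order_omega (d n : ℕ) (hd : 1 ≤ d) (p : Fin n → ℕ) (hp : ∀ i, 0 < p i)
    (a : Fin n → ℤ) (ha : ∀ i, 0 ≤ a i ∧ a i < (p i : ℤ)) (b : ℤ)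
    (x : GLgroup n p) (hx : x = (∑ i, a i • GLx n p i) + b • GLc n p) :
    ((GLle n p x ((d : ℤ) • GLc n p) ↔
        b + ((Finset.univ.filter fun i => 0 < a i).card : ℤ) ≤ (d : ℤ)) ∧
      (GLle n p x ((d : ℤ) • GLc n p) ↔ ¬ GLle n p 0 (x + GLomega d n p))) ∧
    (∀ z : GLgroup n p,
      (GLle n p 0 z ∧ GLle n p z ((d : ℤ) • GLc n p)) ↔
        (GLle n p 0 z ∧ ¬ GLle n p 0 (z + GLomega d n p))) := by
  have : ∀ i, NeZero (p i) := fun i => ⟨(hp i).ne'⟩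
  have hac := GLgroup.le_zsmul_GLc_iff_not_nonneg_add_GLomega (p := p) d
  refine ⟨⟨?_, hac x⟩, fun z => and_congr_right fun _ => hac z⟩
  rw [hx, GLle, GLgroup.mem_GLplus_iff, GLgroup.cCoeff_zsmul_GLc_sub_normalForm ha, sub_nonneg]
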